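/- Let S be a semitopological semigroup and let (S,(K,weak*)) be a nonexpansive dynamical system, where K is a weak* compact convex subset of the dual space X* of an M-embedded Banach space X. Suppose LUC(S) has a left invariant mean and the action π: S × K → K is jointly continuous when K carries the weak* topology. Then there is x ∈ K with sx = x for all s ∈ S, and the fixed point set F(S) = {x ∈ K : sx = x for all s ∈ S} is a nonexpansive retract of K, i.e., there is a map r: K → K with r(K) ⊆ F(S), r ∘ r = r, r fixing F(S) pointwise, and ‖r(x) − r(y)‖ ≤ ‖x − y‖ for all x, y ∈ K. -/

import Mathlib

open Set MeasureTheory BoundedContinuousFunction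

noncomputable section

universe u v

/-- The weak topology on a topological module `X` over `𝕜`: the coarsest topology making all
continuous linear functionals continuous. -/
def weakTop (𝕜 : Type*) (X : Type*) [NontriviallyNormedField 𝕜] [AddCommGroup X]
    [Module 𝕜 X] [TopologicalSpace X] : TopologicalSpace X :=
  ⨅ f : X →L[𝕜] 𝕜, TopologicalSpace.induced (⇑f) inferInstance

/-- A semitopological semigroup: multiplication is separately continuous. -/
def IsSemitopologicalSemigroup (S : Type*) [Semigroup S] [TopologicalSpace S] : Prop :=
  (∀ t : S, Continuous fun s => t * s) ∧ (∀ t : S, Continuous fun s => s * t)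

section CbDefs

variable (S : Type u) [Semigroup S] [TopologicalSpace S]

/-- `g` is the family of left translates of `f`: `g s = L_s f` where `L_s f (t) = f (s * t)`. -/
def IsLTranslates (f : S →ᵇ ℂ) (g : S → S →ᵇ ℂ) : Prop :=
  ∀ s t, g s t = f (s * t)

/-- `LUC(S)`: bounded continuous `f` such that `s ↦ L_s f` is norm continuous. -/
def LUCset : Set (S →ᵇ ℂ) :=
  {f | ∃ g, IsLTranslates S f g ∧ Continuous g}

/-- `AP(S)`: bounded continuous `f` whose set of left translates is relatively compact in the
norm topology of `C(S)`. -/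
def APset : Set (S →ᵇ ℂ) :=
  {f | ∃ g, IsLTranslates S f g ∧ IsCompact (closure (Set.range g))}

/-- `WAP(S)`: bounded continuous `f` whose set of left translates is relatively compact in the
weak topology of `C(S)`. -/
def WAPset : Set (S →ᵇ ℂ) :=
  {f | ∃ g, IsLTranslates S f g ∧
    @IsCompact _ (weakTop ℂ (S →ᵇ ℂ)) (@closure _ (weakTop ℂ (S →ᵇ ℂ)) (Set.range g))}

/-- The topology on `C(S)` induced by the multiplicative means. -/
def lmcTop : TopologicalSpace (S →ᵇ ℂ) :=
  ⨅ μ : {μ : (S →ᵇ ℂ) →L[ℂ] ℂ // ‖μ‖ = 1 ∧ μ 1 = 1 ∧ ∀ f g, μ (f * g) = μ f * μ g},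
    TopologicalSpace.induced (⇑μ.1) inferInstance

/-- `LMC(S)`: bounded continuous `f` such that `s ↦ L_s f` is continuous into `C(S)` with the
topology induced by the multiplicative means. -/
def LMCset : Set (S →ᵇ ℂ) :=
  {f | ∃ g, IsLTranslates S f g ∧ @Continuous _ _ _ (lmcTop S) g}

/-- `Y ⊆ C(S)` has a left invariant mean: there is a norm-one functional `μ` on `C(S)` with
`μ 1 = 1` and `μ (L_s f) = μ f` for all `f ∈ Y` and `s ∈ S`.  (By the Hahn–Banach extension
theorem this is equivalent to the existence of a left invariant mean on the subspace `Y`.) -/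
def HasLIM (Y : Set (S →ᵇ ℂ)) : Prop :=
  ∃ μ : (S →ᵇ ℂ) →L[ℂ] ℂ, ‖μ‖ = 1 ∧ μ 1 = 1 ∧
    ∀ f ∈ Y, ∀ g : S → S →ᵇ ℂ, IsLTranslates S f g → ∀ s, μ (g s) = μ f

end CbDefs

/-- The weak-star topology on the dual of a normed space: the topology of pointwise
convergence. -/
def wstarTop (X : Type*) [SeminormedAddCommGroup X] [NormedSpace ℝ X] :
    TopologicalSpace (StrongDual ℝ X) :=
  TopologicalSpace.induced (fun (f : StrongDual ℝ X) (x : X) => f x) Pi.topologicalSpace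

set_option maxSynthPendingDepth 3 in
/-- A Banach space `X` is `M`-embedded if `X` is an `M`-ideal in its bidual, i.e.
`X*** = X* ⊕₁ X^⊥`. -/
def MEmbeddedSpace (X : Type v) [NormedAddCommGroup X] [NormedSpace ℝ X] : Prop :=
  -- every `F ∈ X***` decomposes as `F = g + H` with `g` in the canonical image of `X*`
  -- and `H ∈ X^⊥`
  (∀ F : StrongDual ℝ (StrongDual ℝ (StrongDual ℝ X)),
    ∃ (g : StrongDual ℝ X)
      (H : StrongDual ℝ (StrongDual ℝ (StrongDual ℝ X))),
      (∀ x : X, H (NormedSpace.inclusionInDoubleDual ℝ X x) = 0) ∧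
      F = NormedSpace.inclusionInDoubleDual ℝ (StrongDual ℝ X) g + H) ∧
  -- and the decomposition is an `ℓ¹`-decomposition
  (∀ (g : StrongDual ℝ X)
      (H : StrongDual ℝ (StrongDual ℝ (StrongDual ℝ X))),
    (∀ x : X, H (NormedSpace.inclusionInDoubleDual ℝ X x) = 0) →
    ‖NormedSpace.inclusionInDoubleDual ℝ (StrongDual ℝ X) g + H‖ =
      ‖NormedSpace.inclusionInDoubleDual ℝ (StrongDual ℝ X) g‖ + ‖H‖)

/-!
A left invariant mean on `LUC(S)` yields an `S`-invariant regular probability measure on every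
nonempty weak* compact set on which `S` acts jointly continuously, and every `s` maps its support
`A` onto itself. The points of `K` within the smallest possible distance `r` of all of `A` form a
nonempty invariant compact convex set. By the `ℓ¹`-decomposition of `X***`, a weak* limit of such
points in `X***`, which stays within distance `r` of `A`, cannot have a component in `X^⊥`, so on
this set the weak and weak* topologies agree.

Where they agree, the identity from weak* to norm has a point of continuity in the support of an
invariant measure; invariance of the measure and nonexpansiveness then make the orbit of such a
point norm totally bounded. Inside a minimal invariant compact convex set this gives a totally
bounded set `A` which every `s` maps onto itself; if `A` had two points, the points within some
distance `r < diam A` of all of `A` would form a strictly smaller invariant compact convex set.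
Hence there is a fixed point.

The retraction comes from Bruck's argument: a nonexpansive self-map of `K` fixing `F(S)` that
contracts distances as much as possible maps `K` into `F(S)`, because the fixed point theorem,
applied to the values at `x` of all such maps, sends every `x` into `F(S)` by one of them.
-/

section NormContinuityPoints

variable {Q E : Type*} [TopologicalSpace Q] [NormedAddCommGroup E] [NormedSpace ℝ E] {ι : Q → E}

lemma continuous_eval_of_weakly_continuous (hι : Continuous fun q => toWeakSpace ℝ E (ι q))
    (f : StrongDual ℝ E) : Continuous fun q => f (ι q) :=
  (WeakBilin.eval_continuous (topDualPairing ℝ E).flip f).comp hι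

lemma isClosed_preimage_of_weakly_continuous (hι : Continuous fun q => toWeakSpace ℝ E (ι q))
    {C : Set E} (hC : Convex ℝ C) (hCcl : IsClosed C) : IsClosed (ι ⁻¹' C) := by
  have hweak : IsClosed (toWeakSpace ℝ E '' C) := by
    rw [← closure_eq_iff_isClosed, ← hC.toWeakSpace_closure ℝ, hCcl.closure_eq]
  convert hweak.preimage hι using 1
  exact Set.ext fun q => ((toWeakSpace ℝ E).injective.mem_set_image).symm

lemma exists_dual_eq_infDist (F : Submodule ℝ E) (y : E) :
    ∃ f : StrongDual ℝ E, ‖f‖ ≤ 1 ∧ (∀ z ∈ F, f z = 0) ∧ f y = Metric.infDist y F := by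
  obtain ⟨g, hg, hgy⟩ := exists_dual_vector'' ℝ (F.mkQL y)
  refine ⟨g ∘L F.mkQL, ?_, fun z hz => ?_, ?_⟩
  · refine ContinuousLinearMap.opNorm_le_bound _ zero_le_one fun x => ?_
    refine (g.le_of_opNorm_le hg _).trans ?_
    gcongr
    exact Submodule.Quotient.norm_mk_le F x
  · simp [(Submodule.Quotient.mk_eq_zero F).2 hz]
  · exact hgy.trans (QuotientAddGroup.norm_mk y)

lemma exists_isOpen_mapsTo_closedBall_of_mapsTo_thickening [BaireSpace Q]
    (hι : Continuous fun q => toWeakSpace ℝ E (ι q)) {A : Set E}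
    (hA : TopologicalSpace.IsSeparable A) {δ : ℝ} {W : Set Q} (hW : IsOpen W) (hWne : W.Nonempty)
    (hWA : MapsTo ι W (Metric.thickening δ A)) :
    ∃ V ⊆ W, IsOpen V ∧ V.Nonempty ∧ ∃ c, MapsTo ι V (Metric.closedBall c δ) := by
  obtain ⟨D, hD, hAD⟩ := hA
  have : Countable D := hD.to_subtype
  have : BaireSpace W := hW.baireSpace
  have : Nonempty W := hWne.to_subtype
  have hclosed (d : D) : IsClosed (Subtype.val ⁻¹' (ι ⁻¹' Metric.closedBall (d : E) δ) : Set W) :=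
    (isClosed_preimage_of_weakly_continuous hι (convex_closedBall _ _)
      Metric.isClosed_closedBall).preimage continuous_subtype_val
  have hcover : ⋃ d : D, (Subtype.val ⁻¹' (ι ⁻¹' Metric.closedBall (d : E) δ) : Set W) = univ := by
    refine eq_univ_of_forall fun q => mem_iUnion.2 ?_
    have hq := Metric.thickening_subset_of_subset δ hAD (hWA q.2)
    obtain ⟨d, hd, hqd⟩ := Metric.mem_thickening_iff.1 (Metric.thickening_closure (s := D) ▸ hq)
    exact ⟨⟨d, hd⟩, hqd.le⟩
  obtain ⟨d, hd⟩ := nonempty_interior_of_iUnion_of_closed hclosed hcover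
  exact ⟨_, Subtype.coe_image_subset W _, hW.isOpenMap_subtype_val _ isOpen_interior,
    hd.image _, d, mapsTo_image_iff.2 interior_subset⟩

lemma exists_dual_separating_of_not_mapsTo_closedBall [BaireSpace Q]
    (hι : Continuous fun q => toWeakSpace ℝ E (ι q)) {t : Set E} (ht : t.Countable) {δ ε : ℝ}
    (hδε : δ < ε) {W : Set Q} (hW : IsOpen W) (hWne : W.Nonempty)
    (hsmall : ∀ V ⊆ W, IsOpen V → V.Nonempty → ∀ c, ¬ MapsTo ι V (Metric.closedBall c ε)) :
    ∃ f : StrongDual ℝ E, ‖f‖ ≤ 1 ∧ (∀ z ∈ t, f z = 0) ∧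
      (W ∩ {q | δ < f (ι q)}).Nonempty ∧ IsOpen (W ∩ {q | δ < f (ι q)}) := by
  obtain ⟨q, hqW, hq⟩ : ∃ q ∈ W, ι q ∉ Metric.thickening ε (Submodule.span ℝ t : Set E) := by
    by_contra! hnear
    obtain ⟨V, hVW, hV, hVne, c, hc⟩ := exists_isOpen_mapsTo_closedBall_of_mapsTo_thickening hι
      ht.isSeparable.span hW hWne hnear
    exact hsmall V hVW hV hVne c hc
  obtain ⟨f, hf, hft, hfq⟩ := exists_dual_eq_infDist (Submodule.span ℝ t) (ι q)
  refine ⟨f, hf, fun z hz => hft z (Submodule.subset_span hz), ⟨q, hqW, ?_⟩, hW.inter ?_⟩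
  · rw [Metric.mem_thickening_iff_infDist_lt (Submodule.nonempty _), not_lt] at hq
    exact (hδε.trans_le hq).trans_eq hfq.symm
  · exact isOpen_lt continuous_const (continuous_eval_of_weakly_continuous hι f)

lemma exists_seq_dual_separating_of_not_mapsTo_closedBall [BaireSpace Q]
    (hι : Continuous fun q => toWeakSpace ℝ E (ι q)) {δ ε : ℝ} (hδε : δ < ε) {W : Set Q}
    (hW : IsOpen W) (hWne : W.Nonempty)
    (hsmall : ∀ V ⊆ W, IsOpen V → V.Nonempty → ∀ c, ¬ MapsTo ι V (Metric.closedBall c ε)) :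
    ∃ (x : ℕ → Q) (f : ℕ → StrongDual ℝ E), (∀ n, ‖f n‖ ≤ 1) ∧
      (∀ n, ∀ k < n, f n (ι (x k)) = 0) ∧ ∀ n, ∀ k ≥ n, δ < f n (ι (x k)) := by
  let State := {p : Set E × Set Q // p.1.Countable ∧ IsOpen p.2 ∧ p.2.Nonempty ∧ p.2 ⊆ W}
  have step : ∀ p : State, ∃ (p' : State) (x : Q) (f : StrongDual ℝ E),
      p.1.1 ⊆ p'.1.1 ∧ ι x ∈ p'.1.1 ∧ p'.1.2 ⊆ p.1.2 ∧ x ∈ p'.1.2 ∧ ‖f‖ ≤ 1 ∧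
      (∀ z ∈ p.1.1, f z = 0) ∧ ∀ q ∈ p'.1.2, δ < f (ι q) := by
    rintro ⟨⟨t, U⟩, ht, hU, hUne, hUW⟩
    obtain ⟨f, hf, hft, ⟨x, hx⟩, hopen⟩ := exists_dual_separating_of_not_mapsTo_closedBall hι ht
      hδε hU hUne fun V hV => hsmall V (hV.trans hUW)
    exact ⟨⟨(insert (ι x) t, U ∩ {q | δ < f (ι q)}), ht.insert _, hopen, ⟨x, hx⟩,
      inter_subset_left.trans hUW⟩, x, f, subset_insert _ _, mem_insert _ _, inter_subset_left,
      hx, hf, hft, fun q hq => hq.2⟩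
  choose next x f htmono hxt hUanti hxU hf hft hfU using step
  let p : ℕ → State := fun n => next^[n] ⟨(∅, W), countable_empty, hW, hWne, subset_rfl⟩
  have hp (n : ℕ) : p (n + 1) = next (p n) := Function.iterate_succ_apply' _ _ _
  have ht : Monotone fun n => (p n).1.1 := monotone_nat_of_le_succ fun n => hp n ▸ htmono (p n)
  have hU : Antitone fun n => (p n).1.2 := antitone_nat_of_succ_le fun n => hp n ▸ hUanti (p n)
  refine ⟨x ∘ p, f ∘ p, fun n => hf _, fun n k hk => hft _ _ ?_, fun n k hk => hfU _ _ ?_⟩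
  · have hmem : ι (x (p k)) ∈ (p (k + 1)).1.1 := hp k ▸ hxt (p k)
    exact ht (Nat.succ_le_of_lt hk) hmem
  · have hmem : x (p k) ∈ (p (k + 1)).1.2 := hp k ▸ hxU (p k)
    exact hp n ▸ hU (Nat.succ_le_succ hk) hmem

lemma not_exists_seq_dual_separating [CompactSpace Q]
    (hι : Continuous fun q => toWeakSpace ℝ E (ι q)) {δ : ℝ} (hδ : 0 < δ) :
    ¬ ∃ (x : ℕ → Q) (f : ℕ → StrongDual ℝ E), (∀ n, ‖f n‖ ≤ 1) ∧
      (∀ n, ∀ k < n, f n (ι (x k)) = 0) ∧ ∀ n, ∀ k ≥ n, δ < f n (ι (x k)) := by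
  -- A weak cluster point `q` of the `x k` lies in the norm closure of their span, so `f n` is small
  -- at `q` for large `n`.
  rintro ⟨x, f, hf, hzero, hlarge⟩
  obtain ⟨q, hq⟩ : ∃ q, MapClusterPt q Filter.atTop x := exists_clusterPt_of_compactSpace _
  have hqδ (n : ℕ) : δ ≤ f n (ι q) :=
    (isClosed_le continuous_const
      (continuous_eval_of_weakly_continuous hι (f n))).mem_of_mapClusterPt hq
      (Filter.eventually_atTop.2 ⟨n, fun k hk => (hlarge n k hk).le⟩)
  let F : ℕ → Submodule ℝ E := fun n => Submodule.span ℝ ((fun k => ι (x k)) '' Iio n)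
  have hF : Monotone F := fun m n hmn => Submodule.span_mono (image_mono (Iio_subset_Iio hmn))
  have hqF : ι q ∈ closure ((⨆ n, F n : Submodule ℝ E) : Set E) := by
    refine (isClosed_preimage_of_weakly_continuous hι (Submodule.convex _).closure
      isClosed_closure).mem_of_mapClusterPt hq (.of_forall fun k => subset_closure ?_)
    exact Submodule.mem_iSup_of_mem (k + 1)
      (Submodule.subset_span (mem_image_of_mem _ (Nat.lt_succ_self k)))
  obtain ⟨z, hz, hqz⟩ := Metric.mem_closure_iff.1 hqF δ hδ
  obtain ⟨n, hn⟩ := (Submodule.mem_iSup_of_directed F hF.directed_le).1 hz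
  have hfz : f n z = 0 := by
    have hker : F n ≤ LinearMap.ker (f n).toLinearMap := Submodule.span_le.2 <| by
      rintro _ ⟨k, hk, rfl⟩
      exact hzero n k hk
    exact hker hn
  have hclose : f n (ι q) ≤ dist (ι q) z := calc
    f n (ι q) = f n (ι q - z) := by rw [map_sub, hfz, sub_zero]
    _ ≤ ‖f n (ι q - z)‖ := le_abs_self _
    _ ≤ dist (ι q) z := by simpa [dist_eq_norm] using (f n).le_of_opNorm_le (hf n) (ι q - z)
  exact (hqδ n).not_gt (hclose.trans_lt hqz)

variable [CompactSpace Q]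

lemma exists_isOpen_mapsTo_closedBall [BaireSpace Q]
    (hι : Continuous fun q => toWeakSpace ℝ E (ι q)) {ε : ℝ} (hε : 0 < ε) {W : Set Q}
    (hW : IsOpen W) (hWne : W.Nonempty) :
    ∃ V ⊆ W, IsOpen V ∧ V.Nonempty ∧ ∃ c, MapsTo ι V (Metric.closedBall c ε) := by
  by_contra! hsmall
  exact not_exists_seq_dual_separating hι (half_pos hε)
    (exists_seq_dual_separating_of_not_mapsTo_closedBall hι (half_lt_self hε) hW hWne hsmall)

theorem dense_setOf_continuousAt_of_weakly_continuous [BaireSpace Q]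
    (hι : Continuous fun q => toWeakSpace ℝ E (ι q)) : Dense {q | ContinuousAt ι q} := by
  let O : ℕ → Set Q := fun n =>
    ⋃₀ {V | IsOpen V ∧ ∃ c, MapsTo ι V (Metric.closedBall c (1 / (n + 1)))}
  have hO (n : ℕ) : IsOpen (O n) := isOpen_sUnion fun V hV => hV.1
  have hdense (n : ℕ) : Dense (O n) := dense_iff_inter_open.2 fun W hW hWne => by
    obtain ⟨V, hVW, hV, ⟨q, hq⟩, hc⟩ :=
      exists_isOpen_mapsTo_closedBall hι (ε := 1 / ((n : ℝ) + 1)) (by positivity) hW hWne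
    exact ⟨q, hVW hq, V, ⟨hV, hc⟩, hq⟩
  refine (dense_iInter_of_isOpen_nat hO hdense).mono fun q hq => ?_
  refine Metric.continuousAt_iff'.2 fun ε hε => ?_
  obtain ⟨n, hn⟩ := exists_nat_one_div_lt (half_pos hε)
  obtain ⟨V, ⟨hV, c, hc⟩, hqV⟩ := mem_iInter.1 hq n
  filter_upwards [hV.mem_nhds hqV] with p hp
  calc dist (ι p) (ι q) ≤ dist (ι p) c + dist (ι q) c := dist_triangle_right _ _ _
    _ ≤ 1 / (n + 1) + 1 / (n + 1) := add_le_add (hc hp) (hc hqV)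
    _ < ε := by linarith

end NormContinuityPoints

section InvariantMeasures

lemma apply_nonneg_of_norm_le_one_of_map_one {Q : Type*} [TopologicalSpace Q] [CompactSpace Q]
    {m : C(Q, ℝ) →L[ℝ] ℝ} (hm : ‖m‖ ≤ 1) (hm1 : m 1 = 1) {f : C(Q, ℝ)} (hf : 0 ≤ f) :
    0 ≤ m f := by
  have hnorm : ‖‖f‖ • (1 : C(Q, ℝ)) - f‖ ≤ ‖f‖ := by
    refine (ContinuousMap.norm_le _ (norm_nonneg f)).2 fun x => ?_
    have hfx : 0 ≤ f x := hf x
    have hfx' : f x ≤ ‖f‖ := (le_abs_self _).trans (f.norm_coe_le_norm x)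
    rw [Real.norm_eq_abs, abs_le]
    simp only [ContinuousMap.sub_apply, ContinuousMap.smul_apply, ContinuousMap.one_apply,
      smul_eq_mul, mul_one]
    constructor <;> linarith
  have hle : ‖f‖ - m f ≤ ‖f‖ := calc
    ‖f‖ - m f = m (‖f‖ • (1 : C(Q, ℝ)) - f) := by rw [map_sub, map_smul, hm1, smul_eq_mul, mul_one]
    _ ≤ ‖m (‖f‖ • (1 : C(Q, ℝ)) - f)‖ := le_abs_self _
    _ ≤ 1 * ‖‖f‖ • (1 : C(Q, ℝ)) - f‖ := m.le_of_opNorm_le hm _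
    _ ≤ ‖f‖ := by rwa [one_mul]
  linarith

lemma exists_isProbabilityMeasure_integral_eq {Q : Type*} [TopologicalSpace Q] [CompactSpace Q]
    [T2Space Q] [MeasurableSpace Q] [BorelSpace Q] {m : C(Q, ℝ) →L[ℝ] ℝ} (hm : ‖m‖ ≤ 1)
    (hm1 : m 1 = 1) :
    ∃ μ : Measure Q, IsProbabilityMeasure μ ∧ μ.Regular ∧ ∀ f : C(Q, ℝ), ∫ x, f x ∂μ = m f := by
  let Λ : CompactlySupportedContinuousMap Q ℝ →ₚ[ℝ] ℝ :=
    { toFun := fun f => m f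
      map_add' := fun f g => map_add m (f : C(Q, ℝ)) g
      map_smul' := fun c f => map_smul m c (f : C(Q, ℝ))
      monotone' := fun f g hfg => sub_nonneg.1 <| by
        rw [← map_sub]
        exact apply_nonneg_of_norm_le_one_of_map_one hm hm1 (sub_nonneg.2 hfg) }
  have hΛ (f : C(Q, ℝ)) : ∫ x, f x ∂(RealRMK.rieszMeasure Λ) = m f :=
    RealRMK.integral_rieszMeasure Λ ⟨f, HasCompactSupport.of_compactSpace f⟩
  refine ⟨RealRMK.rieszMeasure Λ, ⟨?_⟩, inferInstance, hΛ⟩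
  have huniv : (RealRMK.rieszMeasure Λ).real univ = 1 := by simpa [hm1] using hΛ 1
  simpa [measureReal_def, ENNReal.toReal_eq_one_iff] using huniv

lemma smulInvariantMeasure_of_integral_smul_eq {S Q : Type*} [SMul S Q] [TopologicalSpace Q]
    [CompactSpace Q] [T2Space Q] [ContinuousConstSMul S Q] [MeasurableSpace Q] [BorelSpace Q]
    {μ : Measure Q} [IsFiniteMeasure μ] [μ.Regular]
    (hμ : ∀ (s : S) (f : C(Q, ℝ)), ∫ x, f (s • x) ∂μ = ∫ x, f x ∂μ) :
    SMulInvariantMeasure S Q μ := by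
  refine ⟨fun s B hB => ?_⟩
  have hs : Measurable fun x : Q => s • x := (continuous_const_smul s).measurable
  have : (μ.map (s • ·)).InnerRegular := Measure.InnerRegular.map_of_continuous (by fun_prop)
  have hmap : μ.map (s • ·) = μ := Measure.ext_of_integral_eq_on_compactlySupported fun f =>
    (integral_map hs.aemeasurable f.continuous.aestronglyMeasurable).trans (hμ s f)
  rw [← Measure.map_apply hs hB, hmap]

lemma image_smul_support_eq {S Q : Type*} [SMul S Q] [TopologicalSpace Q] [CompactSpace Q]
    [T2Space Q] [ContinuousConstSMul S Q] [MeasurableSpace Q] [BorelSpace Q] {μ : Measure Q}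
    [μ.Regular] [SMulInvariantMeasure S Q μ] (s : S) : (s • ·) '' μ.support = μ.support := by
  have hs : Continuous fun x : Q => s • x := continuous_const_smul s
  have hclosed : IsClosed ((s • ·) '' μ.support) :=
    (Measure.isClosed_support.isCompact.image hs).isClosed
  refine Subset.antisymm ?_ (Measure.support_subset_of_isClosed ?_ ?_)
  · rintro _ ⟨x, hx, rfl⟩
    exact (Measure.mem_support_iff_forall _).2 fun U hU =>
      ((Measure.mem_support_iff_forall x).1 hx _ (hs.continuousAt hU)).trans_le
        (measure_preimage_smul_le μ s U)
  · exact hclosed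
  · rw [mem_ae_iff, ← measure_preimage_smul_of_nullMeasurableSet
      hclosed.isOpen_compl.measurableSet.nullMeasurableSet s]
    exact measure_mono_null (fun x hx hx' => hx (mem_image_of_mem _ hx'))
      Measure.measure_compl_support_of_regular

/-- The functions `t ↦ f (o t)` on `S` obtained from the continuous functions `f` on a compact
space `Q`, where `o : S → Q` will be the orbit map of a point. Values are taken in `ℂ` because
`HasLIM` concerns complex functions. -/
def orbitPullback {S Q : Type*} [TopologicalSpace S] [TopologicalSpace Q] [CompactSpace Q]
    (o : C(S, Q)) : C(Q, ℝ) →L[ℝ] (S →ᵇ ℂ) :=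
  LinearMap.mkContinuous
    { toFun := fun f => .ofNormedAddCommGroup (fun t => (f (o t) : ℂ)) (by fun_prop) ‖f‖
        fun t => by simpa using f.norm_coe_le_norm (o t)
      map_add' := fun f g => by ext; simp
      map_smul' := fun c f => by ext; simp }
    1 fun f => by
      rw [one_mul]
      exact BoundedContinuousFunction.norm_ofNormedAddCommGroup_le _ (norm_nonneg f)
        fun t => by simpa using f.norm_coe_le_norm (o t)

variable {S : Type u} [Semigroup S] [TopologicalSpace S] {Q : Type*} [TopologicalSpace Q]
  [CompactSpace Q] [SemigroupAction S Q] [ContinuousSMul S Q]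

lemma HasLIM.exists_invariant_functional [Nonempty Q] (hLIM : HasLIM S (LUCset S)) :
    ∃ m : C(Q, ℝ) →L[ℝ] ℝ, ‖m‖ ≤ 1 ∧ m 1 = 1 ∧
      ∀ (s : S) (f g : C(Q, ℝ)), (∀ x, g x = f (s • x)) → m g = m f := by
  obtain ⟨μ, hμ, hμ1, hinv⟩ := hLIM
  obtain ⟨x₀⟩ := ‹Nonempty Q›
  let o : C(S, Q) := ⟨fun t => t • x₀, by fun_prop⟩
  refine ⟨Complex.reCLM ∘L μ.restrictScalars ℝ ∘L orbitPullback o, ?_, ?_, fun s f g hgf => ?_⟩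
  · refine ContinuousLinearMap.opNorm_le_bound _ zero_le_one fun f => ?_
    calc ‖(μ (orbitPullback o f)).re‖ ≤ ‖μ (orbitPullback o f)‖ := Complex.abs_re_le_norm _
      _ ≤ 1 * ‖orbitPullback o f‖ := μ.le_of_opNorm_le hμ.le _
      _ ≤ 1 * ‖f‖ := by
        gcongr
        simpa using (orbitPullback o).le_of_opNorm_le
          (LinearMap.mkContinuous_norm_le _ zero_le_one _) f
  · have hone : orbitPullback o 1 = 1 := by
      ext t
      simp [orbitPullback]
    simp [hone, hμ1]
  · let F : C(S × Q, ℝ) := ⟨fun p => f (p.1 • p.2), by fun_prop⟩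
    have htranslates : IsLTranslates S (orbitPullback o f) fun s => orbitPullback o (F.curry s) :=
      fun s t => congrArg (fun x => ((f x : ℝ) : ℂ)) (mul_smul s t x₀).symm
    have hLUC : orbitPullback o f ∈ LUCset S :=
      ⟨_, htranslates, (orbitPullback o).continuous.comp F.curry.continuous⟩
    have hg : g = F.curry s := ContinuousMap.ext hgf
    exact congrArg Complex.re (hg ▸ hinv _ hLUC _ htranslates s)

variable [T2Space Q] [MeasurableSpace Q] [BorelSpace Q]

theorem HasLIM.exists_smulInvariantMeasure [Nonempty Q] (hLIM : HasLIM S (LUCset S)) :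
    ∃ μ : Measure Q, IsProbabilityMeasure μ ∧ μ.Regular ∧ SMulInvariantMeasure S Q μ := by
  obtain ⟨m, hm, hm1, hinv⟩ := hLIM.exists_invariant_functional (Q := Q)
  obtain ⟨μ, hμprob, hμreg, hμ⟩ := exists_isProbabilityMeasure_integral_eq hm hm1
  refine ⟨μ, hμprob, hμreg, smulInvariantMeasure_of_integral_smul_eq fun s f => ?_⟩
  rw [hμ f, ← hinv s f (f.comp ⟨_, continuous_const_smul s⟩) fun _ => rfl, ← hμ]
  rfl

end InvariantMeasures

section TotallyBoundedOrbits

lemma totallyBounded_of_forall_le_measure_closedBall {Q E : Type*} [MeasurableSpace Q]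
    [PseudoMetricSpace E] {μ : Measure Q} [IsFiniteMeasure μ] {ι : Q → E}
    (hι : ∀ c r, MeasurableSet (ι ⁻¹' Metric.closedBall c r)) {T : Set E}
    (hT : ∀ r > 0, ∃ m > 0, ∀ c ∈ T, m ≤ μ (ι ⁻¹' Metric.closedBall c r)) :
    TotallyBounded T := by
  refine Metric.totallyBounded_iff.2 fun ε hε => ?_
  obtain ⟨r, hr, hrε⟩ : ∃ r > 0, 4 * r < ε := ⟨ε / 5, by positivity, by linarith⟩
  obtain ⟨m, hm, hmT⟩ := hT r hr
  obtain ⟨u, huT, hdisj, hcover⟩ :=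
    Vitali.exists_disjoint_subfamily_covering_enlargement_closedBall T id (fun _ => r) r
      (fun _ _ => le_rfl) 4 (by norm_num)
  have hdisj' : Pairwise (Function.onFun Disjoint fun c : u => ι ⁻¹' Metric.closedBall (c : E) r) :=
    fun c d hcd => (hdisj c.2 d.2 (Subtype.coe_injective.ne hcd)).preimage ι
  have hfin := Measure.finite_const_le_meas_of_disjoint_iUnion μ hm
    (fun c : u => hι c r) hdisj' (measure_ne_top _ _)
  have hufin : u.Finite := finite_coe_iff.1 <| finite_univ_iff.1 <|
    hfin.subset fun c _ => hmT c (huT c.2)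
  refine ⟨u, hufin, fun c hc => ?_⟩
  obtain ⟨d, hd, hcd⟩ := hcover c hc
  exact mem_iUnion₂.2 ⟨d, hd, (hcd (Metric.mem_closedBall_self hr.le)).trans_lt hrε⟩

variable {S Q E : Type*} [SMul S Q] [TopologicalSpace Q] [MeasurableSpace Q] {μ : Measure Q}
  [SMulInvariantMeasure S Q μ] [PseudoMetricSpace E] {ι : Q → E}

lemma totallyBounded_orbit_of_continuousWithinAt_support [IsFiniteMeasure μ]
    (hι : ∀ c r, MeasurableSet (ι ⁻¹' Metric.closedBall c r))
    (hcontract : ∀ (s : S) x y, dist (ι (s • x)) (ι (s • y)) ≤ dist (ι x) (ι y))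
    (hμ : μ.support ∈ ae μ) {x : Q} (hx : x ∈ μ.support)
    (hxc : ContinuousWithinAt ι μ.support x) :
    TotallyBounded (range fun s : S => ι (s • x)) := by
  refine totallyBounded_of_forall_le_measure_closedBall (μ := μ) hι fun r hr => ?_
  obtain ⟨U, hU, hUr⟩ := mem_nhdsWithin_iff_exists_mem_nhds_inter.1
    (hxc (Metric.closedBall_mem_nhds (ι x) hr))
  refine ⟨μ U, (Measure.mem_support_iff_forall x).1 hx U hU, ?_⟩
  rintro _ ⟨s, rfl⟩
  calc μ U = μ (U ∩ μ.support) := (measure_inter_conull hμ).symm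
    _ ≤ μ ((s • ·) ⁻¹' (ι ⁻¹' Metric.closedBall (ι (s • x)) r)) :=
      measure_mono fun y hy => (hcontract s y x).trans (hUr hy)
    _ ≤ μ (ι ⁻¹' Metric.closedBall (ι (s • x)) r) := measure_preimage_smul_le μ s _

theorem exists_totallyBounded_orbit_of_weakly_continuous {S Q E : Type*} [SMul S Q]
    [TopologicalSpace Q] [CompactSpace Q] [T2Space Q] [MeasurableSpace Q] [BorelSpace Q]
    [NormedAddCommGroup E] [NormedSpace ℝ E] {μ : Measure Q} [IsProbabilityMeasure μ] [μ.Regular]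
    [SMulInvariantMeasure S Q μ] {ι : Q → E} (hι : Continuous fun x => toWeakSpace ℝ E (ι x))
    (hcontract : ∀ (s : S) x y, dist (ι (s • x)) (ι (s • y)) ≤ dist (ι x) (ι y)) :
    ∃ x, TotallyBounded (range fun s : S => ι (s • x)) := by
  have : CompactSpace μ.support := isCompact_iff_compactSpace.1 Measure.isClosed_support.isCompact
  have : Nonempty μ.support :=
    (Filter.nonempty_of_mem (Measure.support_mem_ae_of_regular (μ := μ))).to_subtype
  obtain ⟨x, hx⟩ := (dense_setOf_continuousAt_of_weakly_continuous
    (hι.comp (continuous_subtype_val (p := (· ∈ μ.support))))).nonempty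
  exact ⟨x, totallyBounded_orbit_of_continuousWithinAt_support
    (fun c r => (isClosed_preimage_of_weakly_continuous hι (convex_closedBall c r)
      Metric.isClosed_closedBall).measurableSet) hcontract Measure.support_mem_ae_of_regular x.2
    ((continuousWithinAt_iff_continuousAt_domRestrict ι x.2).2 hx)⟩

end TotallyBoundedOrbits

lemma exists_mem_convexHull_forall_dist_le_lt_diam {E : Type*} [SeminormedAddCommGroup E]
    [NormedSpace ℝ E] {T : Set E} (hT : TotallyBounded T) (hd : 0 < Metric.diam T) :
    ∃ u ∈ convexHull ℝ T, ∃ r < Metric.diam T, ∀ a ∈ T, dist u a ≤ r := by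
  classical
  -- `u` is the average of a finite `d / 2`-net: each `a` is closer than `d / 2` to one of its
  -- points and within `d` of the others.
  set d := Metric.diam T
  obtain ⟨t, htT, htfin, ht⟩ := Metric.finite_approx_of_totallyBounded hT (d / 2) (half_pos hd)
  have hnear : ∀ a ∈ T, ∃ z ∈ t, dist a z < d / 2 := fun a ha => by simpa using ht ha
  lift t to Finset E using htfin
  obtain ⟨z₀, hz₀, -⟩ : ∃ z ∈ t, _ :=
    hnear _ (nonempty_iff_ne_empty.2 fun h => hd.ne' (by simp [d, h])).some_mem
  set w : ℝ := (t.card : ℝ)⁻¹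
  have hw : 0 < w := inv_pos.2 (by exact_mod_cast Finset.card_pos.2 ⟨z₀, hz₀⟩)
  have hw1 : ∑ _y ∈ t, w = 1 := by
    rw [Finset.sum_const, nsmul_eq_mul, mul_inv_cancel₀ (inv_pos.1 hw).ne']
  refine ⟨∑ y ∈ t, w • y, (convex_convexHull ℝ T).sum_mem (fun _ _ => hw.le) hw1
    fun y hy => subset_convexHull ℝ T (htT hy), d - w * (d / 2), sub_lt_self _ (by positivity),
    fun a ha => ?_⟩
  obtain ⟨z, hz, haz⟩ := hnear a ha
  have hterm : ∀ y ∈ t, dist y a ≤ d - if y = z then d / 2 else 0 := fun y hy => by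
    split_ifs with hyz
    · rw [hyz, dist_comm]; linarith
    · rw [sub_zero]; exact Metric.dist_le_diam_of_mem hT.isBounded (htT hy) ha
  calc dist (∑ y ∈ t, w • y) a
      ≤ ∑ y ∈ t, w • dist y a :=
        (convexOn_univ_dist a).map_sum_le (fun _ _ => hw.le) hw1 fun _ _ => mem_univ _
    _ ≤ ∑ y ∈ t, w * (d - if y = z then d / 2 else 0) :=
        Finset.sum_le_sum fun y hy => mul_le_mul_of_nonneg_left (hterm y hy) hw.le
    _ = d - w * (d / 2) := by
        simp only [mul_sub, Finset.sum_sub_distrib, ← Finset.sum_mul, hw1, one_mul, mul_ite,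
          mul_zero, Finset.sum_ite_eq', if_pos (Finset.mem_coe.1 hz)]

section WeakStarSets

open WeakDual

variable {X : Type*} [NormedAddCommGroup X] [NormedSpace ℝ X]

/-- The intersection of the closed balls of radius `r` centred at the points of `A`, as a subset
of the weak* dual. -/
def closedBallInter (A : Set (WeakDual ℝ X)) (r : ℝ) : Set (WeakDual ℝ X) :=
  ⋂ a ∈ A, toStrongDual ⁻¹' Metric.closedBall (toStrongDual a) r

lemma mem_closedBallInter {A : Set (WeakDual ℝ X)} {r : ℝ} {y : WeakDual ℝ X} :
    y ∈ closedBallInter A r ↔ ∀ a ∈ A, ‖toStrongDual y - toStrongDual a‖ ≤ r := by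
  simp only [closedBallInter, mem_iInter, mem_preimage, mem_closedBall_iff_norm]

lemma isClosed_closedBallInter (A : Set (WeakDual ℝ X)) (r : ℝ) :
    IsClosed (closedBallInter A r) :=
  isClosed_biInter fun _ _ => isClosed_closedBall _ r

lemma convex_closedBallInter (A : Set (WeakDual ℝ X)) (r : ℝ) : Convex ℝ (closedBallInter A r) :=
  convex_iInter₂ fun _ _ => (convex_closedBall _ r).is_linear_preimage
    (toStrongDual (𝕜 := ℝ) (E := X)).toLinearMap.isLinear

lemma exists_norm_toStrongDual_le_of_isCompact [CompleteSpace X] {K : Set (WeakDual ℝ X)}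
    (hK : IsCompact K) : ∃ R, ∀ x ∈ K, ‖toStrongDual x‖ ≤ R :=
  (isBounded_iff_isVonNBounded.2 (hK.isVonNBounded ℝ)).exists_norm_le

lemma closedBallInter_mono (A : Set (WeakDual ℝ X)) : Monotone (closedBallInter A) :=
  fun _ _ hrρ => biInter_mono subset_rfl fun _ _ =>
    preimage_mono (Metric.closedBall_subset_closedBall hrρ)

lemma iInter_Ioi_closedBallInter (A : Set (WeakDual ℝ X)) (r : ℝ) :
    ⋂ ρ : Ioi r, closedBallInter A ρ = closedBallInter A r := by
  ext y
  simp only [mem_iInter, mem_closedBallInter]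
  exact ⟨fun h a ha => le_of_forall_gt_imp_ge_of_dense fun ρ hρ => h ⟨ρ, hρ⟩ a ha,
    fun h ρ a ha => (h a ha).trans ρ.2.le⟩

lemma exists_isLeast_nonempty_inter_closedBallInter {K A : Set (WeakDual ℝ X)} (hK : IsCompact K)
    (hA : A.Nonempty) {R : ℝ} (hR : (K ∩ closedBallInter A R).Nonempty) :
    ∃ r, IsLeast {ρ | (K ∩ closedBallInter A ρ).Nonempty} r := by
  set D := {ρ | (K ∩ closedBallInter A ρ).Nonempty}
  obtain ⟨a, ha⟩ := hA
  have hD : BddBelow D :=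
    ⟨0, fun ρ ⟨y, _, hy⟩ => (norm_nonneg _).trans (mem_closedBallInter.1 hy a ha)⟩
  refine ⟨sInf D, ?_, fun ρ hρ => csInf_le hD hρ⟩
  have hmono : Monotone fun ρ : Ioi (sInf D) => K ∩ closedBallInter A ρ := fun _ _ h =>
    inter_subset_inter_right K (closedBallInter_mono A h)
  have hne : (⋂ ρ : Ioi (sInf D), K ∩ closedBallInter A ρ).Nonempty := by
    refine IsCompact.nonempty_iInter_of_directed_nonempty_isCompact_isClosed _ hmono.directed_ge
      (fun ρ => ?_) (fun ρ => hK.inter_right (isClosed_closedBallInter A ρ))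
      fun ρ => hK.isClosed.inter (isClosed_closedBallInter A ρ)
    obtain ⟨σ, hσ, hσρ⟩ := exists_lt_of_csInf_lt ⟨R, hR⟩ ρ.2
    exact hσ.mono (inter_subset_inter_right K (closedBallInter_mono A hσρ.le))
  rwa [← inter_iInter, iInter_Ioi_closedBallInter] at hne

lemma totallyBounded_image_toStrongDual_closure {T : Set (WeakDual ℝ X)}
    (hT : TotallyBounded (toStrongDual '' T)) : TotallyBounded (toStrongDual '' closure T) := by
  have hcompact : IsCompact (closure (toStrongDual '' T)) :=
    hT.closure.isCompact_of_isClosed isClosed_closure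
  refine hT.closure.subset <| image_subset_iff.2 <|
    closure_minimal (image_subset_iff.1 subset_closure) ?_
  rw [← LinearEquiv.image_symm_eq_preimage]
  exact (hcompact.image NormedSpace.Dual.toWeakDual_continuous).isClosed

end WeakStarSets

section MEmbedded

open Filter Topology WeakDual

variable {X : Type v} [NormedAddCommGroup X] [NormedSpace ℝ X]

set_option maxSynthPendingDepth 3 in
lemma MEmbeddedSpace.norm_sub_add_norm_sub_inclusion (hM : MEmbeddedSpace X)
    {y : StrongDual ℝ X} {F : StrongDual ℝ (StrongDual ℝ (StrongDual ℝ X))}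
    (hF : ∀ x : X, F (NormedSpace.inclusionInDoubleDual ℝ X x) = y x) (a : StrongDual ℝ X) :
    ‖y - a‖ + ‖F - NormedSpace.inclusionInDoubleDual ℝ (StrongDual ℝ X) y‖ =
      ‖F - NormedSpace.inclusionInDoubleDual ℝ (StrongDual ℝ X) a‖ := by
  set J := NormedSpace.inclusionInDoubleDual ℝ (StrongDual ℝ X)
  have hH : ∀ x : X, (F - J y) (NormedSpace.inclusionInDoubleDual ℝ X x) = 0 := fun x =>
    sub_eq_zero.2 (hF x)
  have hJ : ‖J (y - a)‖ = ‖y - a‖ :=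
    (NormedSpace.inclusionInDoubleDualLi ℝ (E := StrongDual ℝ X)).norm_map _
  rw [← hJ, ← hM.2 (y - a) _ hH, map_sub]
  congr 1
  abel

set_option maxSynthPendingDepth 3 in
lemma MEmbeddedSpace.eq_inclusion_of_isLeast (hM : MEmbeddedSpace X)
    {K A : Set (WeakDual ℝ X)} {r : ℝ} (hr : IsLeast {ρ | (K ∩ closedBallInter A ρ).Nonempty} r)
    {y : WeakDual ℝ X} (hy : y ∈ K) {F : StrongDual ℝ (StrongDual ℝ (StrongDual ℝ X))}
    (hFy : ∀ x : X, F (NormedSpace.inclusionInDoubleDual ℝ X x) = y x)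
    (hFA : ∀ a ∈ A,
      ‖F - NormedSpace.inclusionInDoubleDual ℝ (StrongDual ℝ X) (toStrongDual a)‖ ≤ r) :
    F = NormedSpace.inclusionInDoubleDual ℝ (StrongDual ℝ X) (toStrongDual y) := by
  set J := NormedSpace.inclusionInDoubleDual ℝ (StrongDual ℝ X)
  have hyA : y ∈ closedBallInter A (r - ‖F - J (toStrongDual y)‖) :=
    mem_closedBallInter.2 fun a ha => le_sub_iff_add_le.2 <|
      (hM.norm_sub_add_norm_sub_inclusion (y := toStrongDual y) hFy _).trans_le (hFA a ha)
  have hle : r ≤ r - ‖F - J (toStrongDual y)‖ := hr.2 ⟨y, hy, hyA⟩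
  exact sub_eq_zero.1 (norm_le_zero_iff.1 (by linarith))

set_option maxSynthPendingDepth 3 in
theorem MEmbeddedSpace.continuousOn_toWeakSpace_of_isLeast (hM : MEmbeddedSpace X)
    {K A : Set (WeakDual ℝ X)} {r : ℝ} (hA : A.Nonempty)
    (hr : IsLeast {ρ | (K ∩ closedBallInter A ρ).Nonempty} r) :
    ContinuousOn (fun x => toWeakSpace ℝ (StrongDual ℝ X) (toStrongDual x))
      (K ∩ closedBallInter A r) := by
  intro y hy
  refine (tendsto_iff_ultrafilter _ _ _).2 fun 𝒰 h𝒰 => ?_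
  obtain ⟨h𝒰y, h𝒰C⟩ := tendsto_nhdsWithin_iff.1 (tendsto_id'.2 h𝒰)
  let J : WeakDual ℝ X → WeakDual ℝ (StrongDual ℝ (StrongDual ℝ X)) := fun c =>
    StrongDual.toWeakDual (NormedSpace.inclusionInDoubleDual ℝ (StrongDual ℝ X) (toStrongDual c))
  have hJ : ∀ a ∈ A, ∀ᶠ c in 𝒰, J c ∈ toStrongDual ⁻¹' Metric.closedBall (toStrongDual (J a)) r :=
    fun a ha => h𝒰C.mono fun c hc => mem_closedBall_iff_norm.2 <| by
      have hca := (NormedSpace.double_dual_bound ℝ _ _).trans (mem_closedBallInter.1 hc.2 a ha)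
      rwa [map_sub] at hca
  obtain ⟨a₀, ha₀⟩ := hA
  obtain ⟨F, -, hF⟩ := (WeakDual.isCompact_closedBall _ _).ultrafilter_le_nhds (𝒰.map J)
    (le_principal_iff.2 (hJ a₀ ha₀))
  have hFy : toStrongDual F =
      NormedSpace.inclusionInDoubleDual ℝ (StrongDual ℝ X) (toStrongDual y) := by
    refine hM.eq_inclusion_of_isLeast hr hy.1 (fun x => ?_) fun a ha => ?_
    · exact tendsto_nhds_unique (((eval_continuous _).tendsto F).comp hF)
        (((eval_continuous x).tendsto y).comp h𝒰y)
    · exact mem_closedBall_iff_norm.1 ((isClosed_closedBall _ r).mem_of_tendsto hF (hJ a ha))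
  have hinj : Function.Injective (topDualPairing ℝ (StrongDual ℝ X)).flip :=
    (injective_iff_map_eq_zero _).2 fun x hx =>
      SeparatingDual.eq_zero_of_forall_dual_eq_zero (R := ℝ) fun f => DFunLike.congr_fun hx f
  refine (WeakBilin.tendsto_iff_forall_eval_tendsto _ hinj).2 fun f => ?_
  have hf := ((eval_continuous f).tendsto F).comp hF
  rwa [show F f = f (toStrongDual y) from DFunLike.congr_fun hFy f] at hf

end MEmbedded

section NonexpansiveSystems

open WeakDual

variable {S : Type u} [Semigroup S] [TopologicalSpace S] {X : Type v} [NormedAddCommGroup X]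
  [NormedSpace ℝ X] {π : S → WeakDual ℝ X → WeakDual ℝ X} {K : Set (WeakDual ℝ X)}

/-- `π` restricts to a jointly weak* continuous action of the semigroup `S` on `K` by maps that
are nonexpansive for the dual norm. Nothing is required of `π` outside `K`. -/
structure IsNonexpansiveSystem (π : S → WeakDual ℝ X → WeakDual ℝ X) (K : Set (WeakDual ℝ X)) :
    Prop where
  mapsTo : ∀ s, MapsTo (π s) K K
  map_mul : ∀ s t, ∀ x ∈ K, π (s * t) x = π s (π t x)
  norm_sub_le : ∀ s, ∀ x ∈ K, ∀ y ∈ K,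
    ‖toStrongDual (π s x) - toStrongDual (π s y)‖ ≤ ‖toStrongDual x - toStrongDual y‖
  continuousOn : ContinuousOn (fun p : S × WeakDual ℝ X => π p.1 p.2) (univ ×ˢ K)

namespace IsNonexpansiveSystem

lemma mono (h : IsNonexpansiveSystem π K) {C : Set (WeakDual ℝ X)} (hCK : C ⊆ K)
    (hC : ∀ s, MapsTo (π s) C C) : IsNonexpansiveSystem π C where
  mapsTo := hC
  map_mul s t x hx := h.map_mul s t x (hCK hx)
  norm_sub_le s x hx y hy := h.norm_sub_le s x (hCK hx) y (hCK hy)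
  continuousOn := h.continuousOn.mono (prod_mono_right hCK)

lemma continuousOn_apply (h : IsNonexpansiveSystem π K) (s : S) : ContinuousOn (π s) K :=
  h.continuousOn.comp (f := fun x => (s, x)) (by fun_prop) fun _ hx => ⟨mem_univ _, hx⟩

/-- The action of `S` on the subtype `K` given by a nonexpansive system. -/
@[reducible] def semigroupAction (h : IsNonexpansiveSystem π K) : SemigroupAction S K where
  smul s := (h.mapsTo s).restrict
  mul_smul s t x := Subtype.ext (h.map_mul s t x x.2)

lemma continuousSMul (h : IsNonexpansiveSystem π K) :
    letI := h.semigroupAction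
    ContinuousSMul S K :=
  letI := h.semigroupAction
  ⟨Continuous.subtype_mk (h.continuousOn.comp_continuous
    (f := fun p : S × K => (p.1, (p.2 : WeakDual ℝ X))) (by fun_prop) fun p => ⟨mem_univ _, p.2.2⟩)
    fun p => h.mapsTo p.1 p.2.2⟩

lemma mapsTo_inter_closedBallInter (h : IsNonexpansiveSystem π K) {A : Set (WeakDual ℝ X)}
    (hAK : A ⊆ K) (hA : ∀ s, π s '' A = A) (r : ℝ) (s : S) :
    MapsTo (π s) (K ∩ closedBallInter A r) (K ∩ closedBallInter A r) := by
  rintro y ⟨hyK, hy⟩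
  refine ⟨h.mapsTo s hyK, mem_closedBallInter.2 fun b hb => ?_⟩
  rw [← hA s] at hb
  obtain ⟨a, ha, rfl⟩ := hb
  exact (h.norm_sub_le s y hyK a (hAK ha)).trans (mem_closedBallInter.1 hy a ha)

lemma mapsTo_closure_orbit (h : IsNonexpansiveSystem π K) (hK : IsClosed K) {x : WeakDual ℝ X}
    (hx : x ∈ K) (s : S) :
    MapsTo (π s) (closure (range fun t => π t x)) (closure (range fun t => π t x)) := by
  refine MapsTo.closure_of_continuousOn ?_ ((h.continuousOn_apply s).mono
    (closure_minimal (range_subset_iff.2 fun t => h.mapsTo t hx) hK))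
  rintro _ ⟨t, rfl⟩
  exact ⟨s * t, h.map_mul s t x hx⟩

lemma exists_isCompact_image_eq (h : IsNonexpansiveSystem π K) (hLIM : HasLIM S (LUCset S))
    (hK : IsCompact K) (hKne : K.Nonempty) :
    ∃ A ⊆ K, IsCompact A ∧ A.Nonempty ∧ ∀ s, π s '' A = A := by
  let := h.semigroupAction
  have := h.continuousSMul
  have : CompactSpace K := isCompact_iff_compactSpace.1 hK
  have : Nonempty K := hKne.to_subtype
  borelize ↥K
  obtain ⟨μ, _, _, _⟩ := hLIM.exists_smulInvariantMeasure (Q := K)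
  refine ⟨Subtype.val '' μ.support, Subtype.coe_image_subset _ _,
    Measure.isClosed_support.isCompact.image continuous_subtype_val,
    (Filter.nonempty_of_mem (Measure.support_mem_ae_of_regular (μ := μ))).image _, fun s => ?_⟩
  calc π s '' (Subtype.val '' μ.support)
      = Subtype.val '' ((s • ·) '' μ.support) := by rw [image_image, image_image]; rfl
    _ = Subtype.val '' μ.support := by rw [image_smul_support_eq]

lemma exists_totallyBounded_orbit (h : IsNonexpansiveSystem π K) (hLIM : HasLIM S (LUCset S))
    (hK : IsCompact K) (hKne : K.Nonempty)
    (hw : ContinuousOn (fun x => toWeakSpace ℝ (StrongDual ℝ X) (toStrongDual x)) K) :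
    ∃ x ∈ K, TotallyBounded (toStrongDual '' range fun s => π s x) := by
  let := h.semigroupAction
  have := h.continuousSMul
  have : CompactSpace K := isCompact_iff_compactSpace.1 hK
  have : Nonempty K := hKne.to_subtype
  borelize ↥K
  obtain ⟨μ, _, _, _⟩ := hLIM.exists_smulInvariantMeasure (Q := K)
  obtain ⟨x, hx⟩ := exists_totallyBounded_orbit_of_weakly_continuous (S := S) (μ := μ)
    (ι := fun x : K => toStrongDual x.1) (continuousOn_iff_continuous_domRestrict.1 hw)
    fun s y z => by
      rw [dist_eq_norm, dist_eq_norm]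
      exact h.norm_sub_le s y y.2 z z.2
  refine ⟨x, x.2, ?_⟩
  rw [← range_comp]
  exact hx

end IsNonexpansiveSystem

lemma HasLIM.nonempty {Y : Set (S →ᵇ ℂ)} (hLIM : HasLIM S Y) : Nonempty S := by
  obtain ⟨μ, -, hμ1, -⟩ := hLIM
  by_contra hS
  have := not_nonempty_iff.1 hS
  have hone : (1 : S →ᵇ ℂ) = 0 := BoundedContinuousFunction.ext isEmptyElim
  rw [hone, map_zero] at hμ1
  exact zero_ne_one hμ1

end NonexpansiveSystems

section FixedPoints

open WeakDual

/-- The nonempty compact convex sets mapped into themselves by every `π s`; its minimal elements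
are the minimal invariant sets of fixed point theory. -/
def invariantCompactConvexSets {S V : Type*} [TopologicalSpace V] [AddCommGroup V] [Module ℝ V]
    (π : S → V → V) : Set (Set V) :=
  {C | IsCompact C ∧ C.Nonempty ∧ Convex ℝ C ∧ ∀ s, MapsTo (π s) C C}

lemma exists_minimal_invariantCompactConvexSets {S V : Type*} [TopologicalSpace V] [T2Space V]
    [AddCommGroup V] [Module ℝ V] {π : S → V → V} {K : Set V}
    (hK : K ∈ invariantCompactConvexSets π) :
    ∃ C ⊆ K, Minimal (· ∈ invariantCompactConvexSets π) C := by
  refine zorn_superset_nonempty _ (fun c hc hchain hcne => ?_) K hK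
  have : Nonempty c := hcne.to_subtype
  have hclosed : ∀ C ∈ c, IsClosed C := fun C hC => (hc hC).1.isClosed
  refine ⟨⋂₀ c, ⟨(hc hcne.some_mem).1.of_isClosed_subset (isClosed_sInter hclosed)
    (sInter_subset_of_mem hcne.some_mem), ?_, convex_sInter fun C hC => (hc hC).2.2.1,
    fun s x hx C hC => (hc hC).2.2.2 s (hx C hC)⟩, fun C => sInter_subset_of_mem⟩
  exact IsCompact.nonempty_sInter_of_directed_nonempty_isCompact_isClosed
    (fun C hC D hD => (hchain.total hC hD).elim (fun h => ⟨C, hC, subset_rfl, h⟩)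
      fun h => ⟨D, hD, h, subset_rfl⟩) (fun C hC => (hc hC).2.1) (fun C hC => (hc hC).1) hclosed

variable {S : Type u} [Semigroup S] [TopologicalSpace S] {X : Type v} [NormedAddCommGroup X]
  [NormedSpace ℝ X] {π : S → WeakDual ℝ X → WeakDual ℝ X} {K : Set (WeakDual ℝ X)}

lemma subsingleton_of_minimal_of_totallyBounded {C A : Set (WeakDual ℝ X)}
    (hC : Minimal (· ∈ invariantCompactConvexSets π) C)
    (h : IsNonexpansiveSystem π C) (hAC : A ⊆ C) (hA : ∀ s, π s '' A = A)
    (hAT : TotallyBounded (toStrongDual '' A)) : A.Subsingleton := by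
  by_contra hnon
  obtain ⟨p, hp, q, hq, hpq⟩ := not_subsingleton_iff.1 hnon
  have hd : 0 < Metric.diam (toStrongDual '' A) :=
    (dist_pos.2 (toStrongDual.injective.ne hpq)).trans_le <| Metric.dist_le_diam_of_mem
      hAT.isBounded (mem_image_of_mem _ hp) (mem_image_of_mem _ hq)
  have himage : convexHull ℝ (toStrongDual '' A) = toStrongDual '' convexHull ℝ A :=
    ((toStrongDual (𝕜 := ℝ) (E := X)).toLinearMap.image_convexHull A).symm
  obtain ⟨_, hu, r, hrd, hur⟩ := exists_mem_convexHull_forall_dist_le_lt_diam hAT hd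
  obtain ⟨u, huA, rfl⟩ := himage ▸ hu
  obtain ⟨hCcpt, -, hCcv, -⟩ := hC.prop
  have hCr : C ⊆ C ∩ closedBallInter A r :=
    hC.le_of_le ⟨hCcpt.inter_right (isClosed_closedBallInter A r),
      ⟨u, convexHull_min hAC hCcv huA, mem_closedBallInter.2 fun a ha => by
        simpa only [dist_eq_norm] using hur _ (mem_image_of_mem _ ha)⟩,
      hCcv.inter (convex_closedBallInter A r), h.mapsTo_inter_closedBallInter hAC hA r⟩
      inter_subset_left
  have hr : 0 ≤ r := dist_nonneg.trans (hur _ (mem_image_of_mem _ hp))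
  refine hrd.not_ge (Metric.diam_le_of_forall_dist_le hr ?_)
  rintro _ ⟨a, ha, rfl⟩ _ ⟨b, hb, rfl⟩
  rw [dist_eq_norm]
  exact mem_closedBallInter.1 (hCr (hAC ha)).2 b hb

theorem IsNonexpansiveSystem.exists_fixedPoint_of_continuousOn_toWeakSpace
    (h : IsNonexpansiveSystem π K) (hLIM : HasLIM S (LUCset S)) (hKne : K.Nonempty)
    (hKcv : Convex ℝ K) (hK : IsCompact K)
    (hw : ContinuousOn (fun x => toWeakSpace ℝ (StrongDual ℝ X) (toStrongDual x)) K) :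
    ∃ x ∈ K, ∀ s, π s x = x := by
  have := hLIM.nonempty
  obtain ⟨C, hCK, hCmin⟩ := exists_minimal_invariantCompactConvexSets ⟨hK, hKne, hKcv, h.mapsTo⟩
  obtain ⟨hC, hCne, -, hCinv⟩ := hCmin.prop
  have hπC := h.mono hCK hCinv
  obtain ⟨x, hx, hxT⟩ := hπC.exists_totallyBounded_orbit hLIM hC hCne (hw.mono hCK)
  have hBC : closure (range fun s => π s x) ⊆ C :=
    closure_minimal (range_subset_iff.2 fun s => hCinv s hx) hC.isClosed
  obtain ⟨A, hAB, -, ⟨a, ha⟩, hA⟩ := (hπC.mono hBC fun s =>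
    hπC.mapsTo_closure_orbit hC.isClosed hx s).exists_isCompact_image_eq hLIM
      (hC.of_isClosed_subset isClosed_closure hBC) (range_nonempty _).closure
  have hAsub : A.Subsingleton := subsingleton_of_minimal_of_totallyBounded hCmin hπC
    (hAB.trans hBC) hA ((totallyBounded_image_toStrongDual_closure hxT).subset (image_mono hAB))
  exact ⟨a, hCK (hBC (hAB ha)), fun s => hAsub (hA s ▸ mem_image_of_mem _ ha) ha⟩

theorem MEmbeddedSpace.exists_fixedPoint [CompleteSpace X] (hM : MEmbeddedSpace X)
    (h : IsNonexpansiveSystem π K) (hLIM : HasLIM S (LUCset S)) (hKne : K.Nonempty)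
    (hKcv : Convex ℝ K) (hK : IsCompact K) : ∃ x ∈ K, ∀ s, π s x = x := by
  obtain ⟨A, hAK, -, hAne, hA⟩ := h.exists_isCompact_image_eq hLIM hK hKne
  obtain ⟨R, hR⟩ := exists_norm_toStrongDual_le_of_isCompact hK
  obtain ⟨y, hy⟩ := hKne
  obtain ⟨r, hr⟩ := exists_isLeast_nonempty_inter_closedBallInter hK hAne
    ⟨y, hy, mem_closedBallInter.2 fun a ha =>
      (norm_sub_le _ _).trans (add_le_add (hR y hy) (hR a (hAK ha)))⟩
  obtain ⟨x, hx, hfix⟩ := (h.mono inter_subset_left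
    (h.mapsTo_inter_closedBallInter hAK hA r)).exists_fixedPoint_of_continuousOn_toWeakSpace hLIM
      hr.1 (hKcv.inter (convex_closedBallInter A r))
      (hK.inter_right (isClosed_closedBallInter A r))
      (hM.continuousOn_toWeakSpace_of_isLeast hAne hr)
  exact ⟨x, hx.1, hfix⟩

end FixedPoints

section BruckRetraction

open WeakDual

variable {X : Type v} [NormedAddCommGroup X] [NormedSpace ℝ X]

lemma isClosed_setOf_norm_toStrongDual_apply_sub_le {κ : Type*} (d : κ → κ → ℝ) :
    IsClosed {T : κ → WeakDual ℝ X |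
      ∀ x y, ‖toStrongDual (T x) - toStrongDual (T y)‖ ≤ d x y} := by
  have hball : {T : κ → WeakDual ℝ X | ∀ x y, ‖toStrongDual (T x) - toStrongDual (T y)‖ ≤ d x y} =
      ⋂ x, ⋂ y, (fun T : κ → WeakDual ℝ X => T x - T y) ⁻¹'
        (toStrongDual ⁻¹' Metric.closedBall 0 (d x y)) := by
    ext T
    simp
  rw [hball]
  exact isClosed_iInter fun x => isClosed_iInter fun y =>
    (WeakDual.isClosed_closedBall _ _).preimage (by fun_prop)

lemma exists_minimal_norm_toStrongDual_apply_sub_of_isCompact {κ : Type*}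
    {Γ : Set (κ → WeakDual ℝ X)} (hΓ : IsCompact Γ) (hΓne : Γ.Nonempty) :
    ∃ r ∈ Γ, ∀ T ∈ Γ,
      (∀ x y, ‖toStrongDual (T x) - toStrongDual (T y)‖ ≤
        ‖toStrongDual (r x) - toStrongDual (r y)‖) →
      ∀ x y, ‖toStrongDual (r x) - toStrongDual (r y)‖ ≤
        ‖toStrongDual (T x) - toStrongDual (T y)‖ := by
  let D : (κ → WeakDual ℝ X) → κ → κ → ℝ := fun T x y => ‖toStrongDual (T x) - toStrongDual (T y)‖
  obtain ⟨r, hr⟩ : ∃ r : Γ, ∀ T : Γ, D T ≤ D r → D r ≤ D T := by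
    refine exists_maximal_of_chains_bounded (r := fun T U : Γ => D U ≤ D T) (fun c hc => ?_)
      fun hTU hUW => hUW.trans hTU
    rcases c.eq_empty_or_nonempty with rfl | ⟨T₀, hT₀⟩
    · exact ⟨⟨_, hΓne.some_mem⟩, fun _ h => h.elim⟩
    have : Nonempty c := ⟨⟨T₀, hT₀⟩⟩
    let G : c → Set (κ → WeakDual ℝ X) := fun T => Γ ∩ {U | ∀ x y, D U x y ≤ D T.1 x y}
    have hG : ∀ T, IsCompact (G T) := fun T =>
      hΓ.inter_right (isClosed_setOf_norm_toStrongDual_apply_sub_le _)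
    have hGmono : ∀ T U : c, D U.1 ≤ D T.1 → G U ⊆ G T := fun T U hTU W hW =>
      ⟨hW.1, fun x y => (hW.2 x y).trans (hTU x y)⟩
    have hGdir : Directed (· ⊇ ·) G := fun T U => by
      rcases eq_or_ne T U with rfl | hTU
      · exact ⟨T, subset_rfl, subset_rfl⟩
      · exact (hc T.2 U.2 (Subtype.coe_injective.ne hTU)).elim
          (fun h => ⟨U, hGmono _ _ h, subset_rfl⟩) fun h => ⟨T, subset_rfl, hGmono _ _ h⟩
    obtain ⟨U, hU⟩ := IsCompact.nonempty_iInter_of_directed_nonempty_isCompact_isClosed G hGdir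
      (fun T => ⟨T.1, T.1.2, fun _ _ => le_rfl⟩) hG fun T => (hG T).isClosed
    rw [mem_iInter] at hU
    exact ⟨⟨U, (hU ⟨T₀, hT₀⟩).1⟩, fun T hT => (hU ⟨T, hT⟩).2⟩
  exact ⟨r, r.2, fun T hT => hr ⟨T, hT⟩⟩

/-- The self-maps of `K` that are nonexpansive for the dual norm and fix `K ∩ F` pointwise, as a
subset of the product `K → WeakDual ℝ X`, in which it is compact when `K` is. -/
def nonexpansiveFixing (K F : Set (WeakDual ℝ X)) : Set (K → WeakDual ℝ X) :=
  {T | (∀ x, T x ∈ K) ∧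
    (∀ x y, ‖toStrongDual (T x) - toStrongDual (T y)‖ ≤
      ‖toStrongDual (x : WeakDual ℝ X) - toStrongDual (y : WeakDual ℝ X)‖) ∧
    ∀ x : K, x.1 ∈ F → T x = x}

variable {K F : Set (WeakDual ℝ X)}

lemma coe_mem_nonexpansiveFixing : (Subtype.val : K → WeakDual ℝ X) ∈ nonexpansiveFixing K F :=
  ⟨fun x => x.2, fun _ _ => le_rfl, fun _ _ => rfl⟩

lemma apply_mem_of_mem_nonexpansiveFixing {T : K → WeakDual ℝ X}
    (hT : T ∈ nonexpansiveFixing K F) (x : K) : T x ∈ K :=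
  hT.1 x

lemma comp_mem_nonexpansiveFixing {T r : K → WeakDual ℝ X} (hT : T ∈ nonexpansiveFixing K F)
    (hr : r ∈ nonexpansiveFixing K F) :
    (fun x => T ⟨r x, apply_mem_of_mem_nonexpansiveFixing hr x⟩) ∈ nonexpansiveFixing K F := by
  refine ⟨fun x => hT.1 _, fun x y => (hT.2.1 _ _).trans (hr.2.1 x y), fun x hx => ?_⟩
  have hrx : (⟨r x, apply_mem_of_mem_nonexpansiveFixing hr x⟩ : K) = x :=
    Subtype.ext (hr.2.2 x hx)
  exact (congrArg T hrx).trans (hT.2.2 x hx)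

lemma isCompact_nonexpansiveFixing (hK : IsCompact K) : IsCompact (nonexpansiveFixing K F) := by
  refine (isCompact_univ_pi fun _ : K => hK).of_isClosed_subset ?_ fun T hT x _ => hT.1 x
  simp only [nonexpansiveFixing, ofPred_and, ofPred_forall]
  refine (isClosed_iInter fun x => hK.isClosed.preimage (continuous_apply x)).inter (.inter ?_ ?_)
  · simpa only [← ofPred_forall] using isClosed_setOf_norm_toStrongDual_apply_sub_le _
  · exact isClosed_iInter fun x => isClosed_iInter fun _ =>
      isClosed_eq (continuous_apply x) continuous_const

lemma convex_nonexpansiveFixing (hK : Convex ℝ K) : Convex ℝ (nonexpansiveFixing K F) := by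
  rintro T ⟨hTK, hT, hTF⟩ U ⟨hUK, hU, hUF⟩ p q hp hq hpq
  refine ⟨fun x => hK (hTK x) (hUK x) hp hq hpq, fun x y => ?_, fun x hx => ?_⟩
  · let d := ‖toStrongDual x.1 - toStrongDual y.1‖
    calc ‖toStrongDual ((p • T + q • U) x) - toStrongDual ((p • T + q • U) y)‖
        = ‖p • (toStrongDual (T x) - toStrongDual (T y)) +
            q • (toStrongDual (U x) - toStrongDual (U y))‖ := by
          simp only [Pi.add_apply, Pi.smul_apply, map_add, map_smul]
          congr 1
          module
      _ ≤ p * d + q * d := by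
          refine norm_add_le_of_le ?_ ?_
          · rw [norm_smul, Real.norm_of_nonneg hp]
            exact mul_le_mul_of_nonneg_left (hT x y) hp
          · rw [norm_smul, Real.norm_of_nonneg hq]
            exact mul_le_mul_of_nonneg_left (hU x y) hq
      _ = d := by rw [← add_mul, hpq, one_mul]
  · rw [Pi.add_apply, Pi.smul_apply, Pi.smul_apply, hTF x hx, hUF x hx, Convex.combo_self hpq]

theorem exists_nonexpansive_retraction (hK : IsCompact K) (hFK : F ⊆ K)
    (hF : ∀ x, ∃ T ∈ nonexpansiveFixing K F, T x ∈ F) :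
    ∃ r ∈ nonexpansiveFixing K F, ∀ x, r x ∈ F := by
  obtain ⟨r, hr, hmin⟩ := exists_minimal_norm_toStrongDual_apply_sub_of_isCompact
    (isCompact_nonexpansiveFixing (F := F) hK) ⟨_, coe_mem_nonexpansiveFixing⟩
  refine ⟨r, hr, fun x => ?_⟩
  obtain ⟨T, hT, hTx⟩ := hF ⟨r x, apply_mem_of_mem_nonexpansiveFixing hr x⟩
  let p : K := ⟨_, hFK hTx⟩
  have hTr := comp_mem_nonexpansiveFixing hT hr
  -- `T ∘ r` contracts distances at least as much as `r` and identifies `x` with `p`,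
  -- so by minimality `r` identifies them too.
  have hle : ‖toStrongDual (r x) - toStrongDual (r p)‖ ≤
      ‖toStrongDual p.1 - toStrongDual (T ⟨r p, apply_mem_of_mem_nonexpansiveFixing hr p⟩)‖ :=
    hmin _ hTr (fun y z => hT.2.1 _ _) x p
  have hTrp : T ⟨r p, apply_mem_of_mem_nonexpansiveFixing hr p⟩ = p.1 := hTr.2.2 p hTx
  rw [hTrp, sub_self, norm_zero, hr.2.2 p hTx] at hle
  rwa [toStrongDual.injective (sub_eq_zero.1 (norm_le_zero_iff.1 hle))]

end BruckRetraction

section FixedPointRetraction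

open WeakDual

variable {S : Type u} [Semigroup S] [TopologicalSpace S] {X : Type v} [NormedAddCommGroup X]
  [NormedSpace ℝ X] [CompleteSpace X] {π : S → WeakDual ℝ X → WeakDual ℝ X}
  {K : Set (WeakDual ℝ X)}

theorem MEmbeddedSpace.exists_nonexpansive_retraction_fixedPoints (hM : MEmbeddedSpace X)
    (h : IsNonexpansiveSystem π K) (hLIM : HasLIM S (LUCset S)) (hKcv : Convex ℝ K)
    (hK : IsCompact K) :
    ∃ r ∈ nonexpansiveFixing K {x ∈ K | ∀ s, π s x = x}, ∀ x, r x ∈ {x ∈ K | ∀ s, π s x = x} := by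
  refine exists_nonexpansive_retraction hK (sep_subset _ _) fun x => ?_
  set Γ := nonexpansiveFixing K {x ∈ K | ∀ s, π s x = x}
  have hΓK : (fun T : K → WeakDual ℝ X => T x) '' Γ ⊆ K := image_subset_iff.2 fun T hT => hT.1 x
  have hΓ : ∀ s, ∀ T ∈ Γ, (fun y => π s (T y)) ∈ Γ := fun s T hT =>
    ⟨fun y => h.mapsTo s (hT.1 y),
      fun y z => (h.norm_sub_le s _ (hT.1 y) _ (hT.1 z)).trans (hT.2.1 y z),
      fun y hy => (congrArg (π s) (hT.2.2 y hy)).trans (hy.2 s)⟩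
  have hsys : IsNonexpansiveSystem π ((fun T : K → WeakDual ℝ X => T x) '' Γ) :=
    h.mono hΓK fun s => by
      rintro _ ⟨T, hT, rfl⟩
      exact ⟨_, hΓ s T hT, rfl⟩
  obtain ⟨_, ⟨T, hT, rfl⟩, hfix⟩ := hM.exists_fixedPoint hsys hLIM
    (.image _ ⟨_, coe_mem_nonexpansiveFixing⟩)
    ((convex_nonexpansiveFixing hKcv).linear_image (LinearMap.proj x))
    ((isCompact_nonexpansiveFixing hK).image (continuous_apply x))
  exact ⟨T, hT, hT.1 x, hfix⟩

theorem fixedPoint_and_retract_MEmbedded_of_LUC_hasLIM_general (hM : MEmbeddedSpace X)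
    (h : IsNonexpansiveSystem π K) (hLIM : HasLIM S (LUCset S)) (hKne : K.Nonempty)
    (hKcv : Convex ℝ K) (hK : IsCompact K) :
    (∃ x ∈ K, ∀ s, π s x = x) ∧
    ∃ r : WeakDual ℝ X → WeakDual ℝ X,
      (∀ x ∈ K, r x ∈ K ∧ ∀ s, π s (r x) = r x) ∧
      (∀ x ∈ K, r (r x) = r x) ∧
      (∀ x ∈ K, (∀ s, π s x = x) → r x = x) ∧
      (∀ x ∈ K, ∀ y ∈ K,
        ‖toStrongDual (r x) - toStrongDual (r y)‖ ≤ ‖toStrongDual x - toStrongDual y‖) := by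
  classical
  refine ⟨hM.exists_fixedPoint h hLIM hKne hKcv hK, ?_⟩
  obtain ⟨r, ⟨-, hrne, hrfix⟩, hrF⟩ :=
    hM.exists_nonexpansive_retraction_fixedPoints h hLIM hKcv hK
  let ρ : WeakDual ℝ X → WeakDual ℝ X := fun x => if hx : x ∈ K then r ⟨x, hx⟩ else x
  have hρ : ∀ x (hx : x ∈ K), ρ x = r ⟨x, hx⟩ := fun x hx => dif_pos hx
  have hρF : ∀ x ∈ K, ρ x ∈ K ∧ ∀ s, π s (ρ x) = ρ x := fun x hx => hρ x hx ▸ hrF ⟨x, hx⟩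
  have hρfix : ∀ x ∈ K, (∀ s, π s x = x) → ρ x = x := fun x hx hxs =>
    (hρ x hx).trans (hrfix ⟨x, hx⟩ ⟨hx, hxs⟩)
  refine ⟨ρ, hρF, fun x hx => hρfix _ (hρF x hx).1 (hρF x hx).2, hρfix, fun x hx y hy => ?_⟩
  rw [hρ x hx, hρ y hy]
  exact hrne ⟨x, hx⟩ ⟨y, hy⟩

end FixedPointRetraction

/-- **Theorem (M), case (v)**: a nonexpansive, jointly weak* continuous dynamical system
`(S,(K,weak*))` on a weak* compact convex subset of the dual of an `M`-embedded Banach space has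
a common fixed point provided `LUC(S)` has a left invariant mean; moreover the fixed point set
is a nonexpansive retract of `K`. -/
theorem fixedPoint_and_retract_MEmbedded_of_LUC_hasLIM
    {S : Type u} [Semigroup S] [TopologicalSpace S] [T2Space S]
    (hS : IsSemitopologicalSemigroup S)
    {X : Type v} [NormedAddCommGroup X] [NormedSpace ℝ X] [CompleteSpace X]
    -- `X` is an `M`-embedded Banach space
    (hM : MEmbeddedSpace X)
    (K : Set (StrongDual ℝ X)) (π : S → StrongDual ℝ X → StrongDual ℝ X)
    -- `K` is a nonempty weak* compact convex set
    (hKne : K.Nonempty) (hKcv : Convex ℝ K) (hKcpt : @IsCompact _ (wstarTop X) K)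
    -- `(S,(K,weak*))` is a dynamical system
    (hinv : ∀ s : S, MapsTo (π s) K K)
    (hact : ∀ s t : S, ∀ x ∈ K, π (s * t) x = π s (π t x))
    (horb : ∀ x ∈ K, @Continuous S _ _ (wstarTop X) fun s => π s x)
    (htra : ∀ s : S, @ContinuousOn _ _ (wstarTop X) (wstarTop X) (π s) K)
    -- the system is nonexpansive
    (hne : ∀ s : S, ∀ x ∈ K, ∀ y ∈ K, ‖π s x - π s y‖ ≤ ‖x - y‖)
    -- the action is jointly continuous when `K` carries the weak* topology
    (hjoint : @ContinuousOn (S × StrongDual ℝ X) _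
      (@instTopologicalSpaceProd S _ _ (wstarTop X)) (wstarTop X)
      (fun q => π q.1 q.2) (Set.univ ×ˢ K))
    -- the amenability hypothesis
    (hLIM : HasLIM S (LUCset S)) :
    -- `S` has a fixed point in `K` ...
    (∃ x ∈ K, ∀ s : S, π s x = x) ∧
    -- ... and `F(S)` is a nonexpansive retract of `K`
    ∃ r : StrongDual ℝ X → StrongDual ℝ X,
      (∀ x ∈ K, r x ∈ K ∧ ∀ s : S, π s (r x) = r x) ∧
      (∀ x ∈ K, r (r x) = r x) ∧
      (∀ x ∈ K, (∀ s : S, π s x = x) → r x = x) ∧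
      (∀ x ∈ K, ∀ y ∈ K, ‖r x - r y‖ ≤ ‖x - y‖) :=
  fixedPoint_and_retract_MEmbedded_of_LUC_hasLIM_general hM ⟨hinv, hact, hne, hjoint⟩ hLIM hKne hKcv
    hKcpt
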